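/- Let a be an even natural number, b a natural number, and n a natural number. Then #{(c,d) ∈ (a,b)+D : c + d = n} = #{(c,d) ∈ (a,−1)+D : c + d = n} + #{(c,d) ∈ (−2,b+1)+D : c + d = n} + #{(c,d) ∈ C_{G/B}(a,b) : c + d = n}. -/

import Mathlib

/-- The set `C(a,b) = {(c,d) ∈ ℕ² : c ≡ a (mod 2), and if c = 0 then d ≡ b (mod 2)}`. -/
def Cset (a b : ℕ) : Set (ℕ × ℕ) :=
  {p | p.1 % 2 = a % 2 ∧ (p.1 = 0 → p.2 % 2 = b % 2)}

/-- The region `C_{G/B}(a,b)`. -/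
def CGB (a b : ℕ) : Set (ℕ × ℕ) := {p ∈ Cset a b | p.1 ≤ a ∧ p.2 ≤ b}

/-- The region `C_{O1}(a,b)`. -/
def CO1 (a b : ℕ) : Set (ℕ × ℕ) := {p ∈ Cset a b | a < p.1 ∧ p.2 ≤ b}

/-- The region `C_{O2}(a,b)`. -/
def CO2 (a b : ℕ) : Set (ℕ × ℕ) := {p ∈ Cset a b | p.1 ≤ a ∧ b < p.2}

/-- The region `C_cl(a,b) = C_{O1 ∩ O2}(a,b)`. -/
def Ccl (a b : ℕ) : Set (ℕ × ℕ) := {p ∈ Cset a b | a < p.1 ∧ b < p.2}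

/-- The quadrant `D = {(c,d) ∈ ℤ² : c ≤ 0, d ≤ 0, c even}`. -/
def D : Set (ℤ × ℤ) := {p | p.1 ≤ 0 ∧ p.2 ≤ 0 ∧ p.1 % 2 = 0}

/-- The translate `(p,q) + D`. -/
def tD (v : ℤ × ℤ) : Set (ℤ × ℤ) := (fun p => v + p) '' D

/-- The natural embedding `ℕ² ↪ ℤ²`. -/
def emb (p : ℕ × ℕ) : ℤ × ℤ := ((p.1 : ℤ), (p.2 : ℤ))

/-!
Let `a` be even. On the line `c + d = n`, the points of `(a,b) + D` with `d < 0` form `(a,-1) + D`,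
those with `c < 0` form `(-2,b) + D`, and no point is of both kinds since `n ≥ 0`. Counting with
`(-2,b+1) + D` instead of `(-2,b) + D` adds the point `(n-b-1, b+1)` if it lies in this translate.
Counting with `C_{G/B}(a,b)` instead of all points with `c, d ≥ 0` loses the point `(0,n)` if
`n ≤ b` has the wrong parity. Both happen exactly when `n < b` and `n ≢ b (mod 2)`, so they cancel.
-/

lemma mem_tD {u v : ℤ} {x : ℤ × ℤ} :
    x ∈ tD (u, v) ↔ x.1 ≤ u ∧ x.2 ≤ v ∧ x.1 % 2 = u % 2 := by
  constructor
  · rintro ⟨p, ⟨h₁, h₂, h_even⟩, rfl⟩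
    simp only [Prod.fst_add, Prod.snd_add]
    omega
  · rintro ⟨h₁, h₂, h_mod⟩
    refine ⟨x - (u, v), ⟨?_, ?_, ?_⟩, add_sub_cancel _ _⟩ <;>
      simp only [Prod.fst_sub, Prod.snd_sub] <;> omega

lemma finite_tD_fiber (u v m : ℤ) : {x ∈ tD (u, v) | x.1 + x.2 = m}.Finite := by
  refine (Set.finite_Icc (m - v, m - u) (u, v)).subset fun x ⟨hx, hm⟩ ↦ ?_
  rw [mem_tD] at hx
  simp only [Set.mem_Icc, Prod.le_def]
  omega

lemma ncard_tD_fiber_eq_add_add {u v p q m : ℤ} (hp : p - 2 ≤ u) (hpu : p % 2 = u % 2)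
    (hq : q - 1 ≤ v) (hm : p + q ≤ m + 2) :
    {x ∈ tD (u, v) | x.1 + x.2 = m}.ncard =
      {x ∈ tD (u, q - 1) | x.1 + x.2 = m}.ncard + {x ∈ tD (p - 2, v) | x.1 + x.2 = m}.ncard +
      {x ∈ tD (u, v) | p ≤ x.1 ∧ q ≤ x.2 ∧ x.1 + x.2 = m}.ncard := by
  set below := {x ∈ tD (u, q - 1) | x.1 + x.2 = m} with h_below
  set left := {x ∈ tD (p - 2, v) | x.1 + x.2 = m} with h_left
  set rest := {x ∈ tD (u, v) | p ≤ x.1 ∧ q ≤ x.2 ∧ x.1 + x.2 = m} with h_rest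
  have h_union : {x ∈ tD (u, v) | x.1 + x.2 = m} = (below ∪ left) ∪ rest := by
    ext x
    simp only [h_below, h_left, h_rest, Set.mem_union, Set.mem_ofPred_eq, mem_tD]
    omega
  have h_disj : Disjoint below left := by
    simp only [h_below, h_left, Set.disjoint_left, Set.mem_ofPred_eq, mem_tD]
    omega
  have h_disj_rest : Disjoint (below ∪ left) rest := by
    simp only [h_below, h_left, h_rest, Set.disjoint_left, Set.mem_union, Set.mem_ofPred_eq,
      mem_tD]
    omega
  have below_fin : below.Finite := finite_tD_fiber u (q - 1) m
  have left_fin : left.Finite := finite_tD_fiber (p - 2) v m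
  have rest_fin : rest.Finite :=
    (finite_tD_fiber u v m).subset fun _ ⟨hx, _, _, hx_sum⟩ ↦ ⟨hx, hx_sum⟩
  rw [h_union, Set.ncard_union_eq h_disj_rest (below_fin.union left_fin) rest_fin,
    Set.ncard_union_eq h_disj below_fin left_fin]

lemma ncard_tD_fiber_add_one (u v m : ℤ) :
    {x ∈ tD (u, v + 1) | x.1 + x.2 = m}.ncard =
      {x ∈ tD (u, v) | x.1 + x.2 = m}.ncard +
        if m - (v + 1) ≤ u ∧ (m - (v + 1)) % 2 = u % 2 then 1 else 0 := by
  split_ifs with h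
  · have h_insert : {x ∈ tD (u, v + 1) | x.1 + x.2 = m} =
        insert (m - (v + 1), v + 1) {x ∈ tD (u, v) | x.1 + x.2 = m} := by
      ext x
      simp only [Set.mem_insert_iff, Set.mem_ofPred_eq, mem_tD, Prod.ext_iff]
      omega
    rw [h_insert, Set.ncard_insert_of_notMem _ (finite_tD_fiber u v m)]
    simp only [Set.mem_ofPred_eq, mem_tD]
    omega
  · congr 1
    ext x
    simp only [Set.mem_ofPred_eq, mem_tD]
    omega

lemma emb_injective : Function.Injective emb :=
  Nat.cast_injective.prodMap Nat.cast_injective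

lemma mem_emb_image_CGB_fiber {a b n : ℕ} {x : ℤ × ℤ} :
    x ∈ emb '' {p ∈ CGB a b | p.1 + p.2 = n} ↔
      x ∈ tD (a, b) ∧ 0 ≤ x.1 ∧ 0 ≤ x.2 ∧ x.1 + x.2 = n ∧ (x.1 = 0 → x.2 % 2 = b % 2) := by
  rw [mem_tD]
  constructor
  · rintro ⟨p, ⟨⟨⟨h_mod, h_zero⟩, h_le⟩, h_sum⟩, rfl⟩
    simp only [emb]
    omega
  · intro h
    refine ⟨(x.1.toNat, x.2.toNat), ⟨⟨⟨?_, ?_⟩, ?_⟩, ?_⟩, Prod.ext ?_ ?_⟩ <;>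
      simp only [emb] <;> omega

lemma ncard_tD_fiber_nonneg (a b n : ℕ) :
    {x ∈ tD (a, b) | 0 ≤ x.1 ∧ 0 ≤ x.2 ∧ x.1 + x.2 = n}.ncard =
      {p ∈ CGB a b | p.1 + p.2 = n}.ncard +
        if a % 2 = 0 ∧ n < b ∧ n % 2 ≠ b % 2 then 1 else 0 := by
  rw [← Set.ncard_image_of_injective _ emb_injective]
  split_ifs with h
  · have h_insert : {x ∈ tD (a, b) | 0 ≤ x.1 ∧ 0 ≤ x.2 ∧ x.1 + x.2 = n} =
        insert (0, (n : ℤ)) (emb '' {p ∈ CGB a b | p.1 + p.2 = n}) := by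
      ext x
      simp only [Set.mem_insert_iff, mem_emb_image_CGB_fiber, Set.mem_ofPred_eq, mem_tD,
        Prod.ext_iff]
      omega
    have h_fin : (emb '' {p ∈ CGB a b | p.1 + p.2 = n}).Finite :=
      (finite_tD_fiber a b n).subset fun x hx ↦ by
        obtain ⟨hx_mem, _, _, hx_sum, _⟩ := mem_emb_image_CGB_fiber.mp hx
        exact ⟨hx_mem, hx_sum⟩
    have h_notMem : (0, (n : ℤ)) ∉ emb '' {p ∈ CGB a b | p.1 + p.2 = n} := by
      rw [mem_emb_image_CGB_fiber]
      omega
    rw [h_insert, Set.ncard_insert_of_notMem h_notMem h_fin]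
  · congr 1
    ext x
    simp only [mem_emb_image_CGB_fiber, Set.mem_ofPred_eq, mem_tD]
    omega

/-- For `a` even: the count of points on the line `c + d = n` in `(a,b)+D`
is the sum of the counts in `(a,-1)+D`, in `(-2,b+1)+D`, and in
`C_{G/B}(a,b)`. -/
theorem CGB_fiber_count_even (a b n : ℕ) (ha : Even a) :
    Set.ncard {x ∈ tD ((a : ℤ), (b : ℤ)) | x.1 + x.2 = (n : ℤ)} =
      Set.ncard {x ∈ tD ((a : ℤ), -1) | x.1 + x.2 = (n : ℤ)} +
      Set.ncard {x ∈ tD (-2, (b : ℤ) + 1) | x.1 + x.2 = (n : ℤ)} +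
      Set.ncard {p ∈ CGB a b | p.1 + p.2 = n} := by
  have ha_mod : a % 2 = 0 := Nat.even_iff.mp ha
  have h_split := ncard_tD_fiber_eq_add_add (u := a) (v := b) (p := 0) (q := 0) (m := n)
    (by omega) (by omega) (by omega) (by omega)
  have extra_iff_missing : ((n : ℤ) - (b + 1) ≤ -2 ∧ ((n : ℤ) - (b + 1)) % 2 = -2 % 2) ↔
      (a % 2 = 0 ∧ n < b ∧ n % 2 ≠ b % 2) := by
    omega
  rw [h_split, zero_sub, zero_sub, ncard_tD_fiber_nonneg, ncard_tD_fiber_add_one]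
  simp only [extra_iff_missing]
  ring
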